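/- Let R be a commutative ring and A a commutative R-algebra. The A-linear map Ω_{A/R} → Ω_{A[ε]/R[ε]} sending ω to ε • ι(ω) is injective, and its image equals the kernel of the map Ω_{A[ε]/R[ε]} → Ω_{A/R} on Kähler differentials induced by the projection π : A[ε] → A (setting ε = 0). In particular the kernel of the map induced by ε = 0 is isomorphic, as an A-module, to Ω_{A/R}. -/

import Mathlib

open scoped DualNumber TensorProduct
open TrivSqZeroExt

noncomputable section

variable (R A : Type*) [CommRing R] [CommRing A] [Algebra R A]

/-- The functorial `R`-algebra homomorphism `R[ε] →ₐ[R] A[ε]` sending `ε` to `ε`,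
making `A[ε]` into an `R[ε]`-algebra. -/
def DualNumber.inclAlgHom : R[ε] →ₐ[R] A[ε] :=
  DualNumber.lift ⟨(Algebra.ofId R A[ε], ε),
    DualNumber.eps_mul_eps, fun _ => Commute.all _ _⟩

/-- `A[ε]` as an `R[ε]`-algebra. -/
instance : Algebra R[ε] A[ε] := (DualNumber.inclAlgHom R A).toRingHom.toAlgebra

instance : IsScalarTower R R[ε] A[ε] := ⟨fun r x a => by
  show DualNumber.inclAlgHom R A (r • x) * a = r • (DualNumber.inclAlgHom R A x * a)
  rw [map_smul, smul_mul_assoc]⟩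

instance : SMulCommClass R[ε] A A[ε] := ⟨fun x a b => by
  show DualNumber.inclAlgHom R A x * (a • b) = a • (DualNumber.inclAlgHom R A x * b)
  rw [mul_smul_comm]⟩

/-- `ι : Ω[A⁄R] → Ω[A[ε]⁄R[ε]]`, the map on Kähler differentials induced by the
inclusion `A → A[ε]` (over `R → R[ε]`). -/
def iotaOmega : Ω[A⁄R] →ₗ[A] Ω[A[ε]⁄R[ε]] := KaehlerDifferential.map R R[ε] A A[ε]

/-- `A` as an `A[ε]`-algebra via the projection `π : A[ε] → A` setting `ε = 0`. -/
instance : Algebra A[ε] A := (TrivSqZeroExt.fstHom A A A).toRingHom.toAlgebra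

/-- `R` as an `R[ε]`-algebra via the projection setting `ε = 0`. -/
instance : Algebra R[ε] R := (TrivSqZeroExt.fstHom R R R).toRingHom.toAlgebra

/-- `A` as an `R[ε]`-algebra. -/
instance : Algebra R[ε] A :=
  ((algebraMap R A).comp (TrivSqZeroExt.fstHom R R R).toRingHom).toAlgebra

instance : @IsScalarTower R[ε] R A Algebra.toSMul Algebra.toSMul Algebra.toSMul :=
  IsScalarTower.of_algebraMap_eq fun _ => rfl

instance : @IsScalarTower R[ε] A[ε] A Algebra.toSMul Algebra.toSMul Algebra.toSMul :=
  IsScalarTower.of_algebraMap_eq fun x => by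
    show algebraMap R A x.fst = ((DualNumber.inclAlgHom R A) x).fst
    simp [DualNumber.inclAlgHom, DualNumber.lift_apply_apply, Algebra.ofId_apply,
      TrivSqZeroExt.algebraMap_eq_inl']

instance : SMulCommClass R A[ε] A := ⟨fun r x a => by
  show r • ((TrivSqZeroExt.fstHom A A A) x * a) = (TrivSqZeroExt.fstHom A A A) x * (r • a)
  rw [mul_smul_comm]⟩

/-- The map `Ω[A[ε]⁄R[ε]] → Ω[A⁄R]` on Kähler differentials induced by the projection
`π : A[ε] → A` setting `ε = 0`. -/
def projOmega : Ω[A[ε]⁄R[ε]] →ₗ[A[ε]] Ω[A⁄R] := KaehlerDifferential.map R[ε] R A[ε] A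

/-- Auxiliary: `Ω[A⁄R] ⊕ ε Ω[A⁄R]`. -/
def EpsOmega : Type _ := Ω[A⁄R] × Ω[A⁄R]

instance : AddCommGroup (EpsOmega R A) := inferInstanceAs (AddCommGroup (Ω[A⁄R] × Ω[A⁄R]))

instance : Module A[ε] (EpsOmega R A) where
  smul x m := (x.fst • m.1, x.fst • m.2 + x.snd • m.1)
  one_smul m := by
    refine Prod.ext ?_ ?_
    · change (1 : A[ε]).fst • m.1 = m.1
      simp
    · change (1 : A[ε]).fst • m.2 + (1 : A[ε]).snd • m.1 = m.2
      simp
  mul_smul x y m := by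
    refine Prod.ext ?_ ?_
    · change (x * y).fst • m.1 = x.fst • y.fst • m.1
      simp [mul_smul]
    · change (x * y).fst • m.2 + (x * y).snd • m.1 =
        x.fst • (y.fst • m.2 + y.snd • m.1) + x.snd • (y.fst • m.1)
      simp only [TrivSqZeroExt.fst_mul, TrivSqZeroExt.snd_mul, smul_eq_mul,
        MulOpposite.smul_eq_mul_unop, MulOpposite.unop_op, smul_smul, smul_add, add_smul]
      abel
  smul_zero x := by
    refine Prod.ext ?_ ?_
    · change x.fst • (0 : Ω[A⁄R]) = 0
      simp
    · change x.fst • (0 : Ω[A⁄R]) + x.snd • (0 : Ω[A⁄R]) = 0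
      simp
  smul_add x m n := by
    refine Prod.ext ?_ ?_
    · change x.fst • (m.1 + n.1) = x.fst • m.1 + x.fst • n.1
      simp
    · change x.fst • (m.2 + n.2) + x.snd • (m.1 + n.1) =
        (x.fst • m.2 + x.snd • m.1) + (x.fst • n.2 + x.snd • n.1)
      simp only [smul_add]
      abel
  add_smul x y m := by
    refine Prod.ext ?_ ?_
    · change (x + y).fst • m.1 = x.fst • m.1 + y.fst • m.1
      simp [add_smul]
    · change (x + y).fst • m.2 + (x + y).snd • m.1 =
        (x.fst • m.2 + x.snd • m.1) + (y.fst • m.2 + y.snd • m.1)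
      simp only [TrivSqZeroExt.fst_add, TrivSqZeroExt.snd_add, add_smul]
      abel
  zero_smul m := by
    refine Prod.ext ?_ ?_
    · change (0 : A[ε]).fst • m.1 = 0
      simp
    · change (0 : A[ε]).fst • m.2 + (0 : A[ε]).snd • m.1 = 0
      simp

instance : Module R[ε] (EpsOmega R A) := Module.compHom _ (algebraMap R[ε] A[ε])

instance : @IsScalarTower R[ε] A[ε] (EpsOmega R A) Algebra.toSMul _ _ :=
  @IsScalarTower.mk _ _ _ Algebra.toSMul _ _ fun r x m => by
    rw [Algebra.smul_def, mul_smul]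
    rfl

section Generic

variable {S B : Type*} [CommRing S] [CommRing B] [Algebra S B]

lemma gen_smul_add (x : B) (u v : Ω[B⁄S]) : x • (u + v) = x • u + x • v := smul_add _ _ _

lemma gen_add_smul (x y : B) (u : Ω[B⁄S]) : (x + y) • u = x • u + y • u := add_smul _ _ _

lemma gen_mul_smul (x y : B) (u : Ω[B⁄S]) : (x * y) • u = x • y • u := mul_smul _ _ _

lemma gen_smul_zero (x : B) : x • (0 : Ω[B⁄S]) = 0 := smul_zero _

lemma gen_zero_smul (u : Ω[B⁄S]) : (0 : B) • u = 0 := zero_smul _ _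

lemma gen_smul_comm (x y : B) (u : Ω[B⁄S]) : x • y • u = y • x • u := smul_comm _ _ _

end Generic

lemma epsOmega_smul (x : A[ε]) (m : EpsOmega R A) :
    x • m = ((x.fst • m.1, x.fst • m.2 + x.snd • m.1) : Ω[A⁄R] × Ω[A⁄R]) := rfl

lemma algebraMap_fst (x : R[ε]) : (algebraMap R[ε] A[ε] x).fst = algebraMap R A x.fst := by
  change ((DualNumber.inclAlgHom R A) x).fst = _
  simp [DualNumber.inclAlgHom, DualNumber.lift_apply_apply, Algebra.ofId_apply,
      TrivSqZeroExt.algebraMap_eq_inl']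

lemma algebraMap_snd (x : R[ε]) : (algebraMap R[ε] A[ε] x).snd = algebraMap R A x.snd := by
  change ((DualNumber.inclAlgHom R A) x).snd = _
  simp [DualNumber.inclAlgHom, DualNumber.lift_apply_apply, Algebra.ofId_apply,
      TrivSqZeroExt.algebraMap_eq_inl']

lemma algebraMap_eps : algebraMap R[ε] A[ε] ε = ε := by
  ext
  · rw [algebraMap_fst]; simp
  · rw [algebraMap_snd]; simp

/-- Auxiliary derivation `a + b ε ↦ (D a, D b)`. -/
def epsDer : Derivation R[ε] A[ε] (EpsOmega R A) where
  toFun x := ((KaehlerDifferential.D R A x.fst, KaehlerDifferential.D R A x.snd) :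
    Ω[A⁄R] × Ω[A⁄R])
  map_add' x y := by
    refine Prod.ext ?_ ?_
    · exact map_add (KaehlerDifferential.D R A) x.fst y.fst
    · exact map_add (KaehlerDifferential.D R A) x.snd y.snd
  map_smul' r x := by
    refine Prod.ext ?_ ?_
    · change KaehlerDifferential.D R A (algebraMap R[ε] A[ε] r * x).fst =
        (algebraMap R[ε] A[ε] r).fst • KaehlerDifferential.D R A x.fst
      simp [algebraMap_fst]
    · change KaehlerDifferential.D R A (algebraMap R[ε] A[ε] r * x).snd =
        (algebraMap R[ε] A[ε] r).fst • KaehlerDifferential.D R A x.snd +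
        (algebraMap R[ε] A[ε] r).snd • KaehlerDifferential.D R A x.fst
      simp [algebraMap_fst, algebraMap_snd]
  map_one_eq_zero' := by
    refine Prod.ext ?_ ?_
    · change KaehlerDifferential.D R A (1 : A[ε]).fst = 0
      simp
    · change KaehlerDifferential.D R A (1 : A[ε]).snd = 0
      simp
  leibniz' x y := by
    refine Prod.ext ?_ ?_
    · change KaehlerDifferential.D R A (x * y).fst =
        x.fst • KaehlerDifferential.D R A y.fst + y.fst • KaehlerDifferential.D R A x.fst
      simp
    · change KaehlerDifferential.D R A (x * y).snd =
        (x.fst • KaehlerDifferential.D R A y.snd + x.snd • KaehlerDifferential.D R A y.fst) +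
        (y.fst • KaehlerDifferential.D R A x.snd + y.snd • KaehlerDifferential.D R A x.fst)
      simp
      abel

lemma iotaOmega_D (a : A) : iotaOmega R A (KaehlerDifferential.D R A a) =
    KaehlerDifferential.D R[ε] A[ε] (inl a) :=
  KaehlerDifferential.map_D R R[ε] A A[ε] a

lemma iotaOmega_smul (a : A) (w : Ω[A⁄R]) :
    iotaOmega R A (a • w) = (inl a : A[ε]) • iotaOmega R A w := by
  rw [map_smul, ← algebraMap_smul A[ε] a]
  rfl

lemma omega_induction {p : Ω[A⁄R] → Prop} (w : Ω[A⁄R])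
    (hD : ∀ a, p (KaehlerDifferential.D R A a)) (h0 : p 0)
    (hadd : ∀ x y, p x → p y → p (x + y)) (hsmul : ∀ (a : A) x, p x → p (a • x)) : p w := by
  have h : w ∈ Submodule.span A (Set.range (KaehlerDifferential.D R A)) := by
    rw [KaehlerDifferential.span_range_derivation]; trivial
  induction h using Submodule.span_induction with
  | mem x hx => obtain ⟨a, rfl⟩ := hx; exact hD a
  | zero => exact h0
  | add x y _ _ hx hy => exact hadd x y hx hy
  | smul a x _ hx => exact hsmul a x hx

lemma lift_iota (w : Ω[A⁄R]) : (epsDer R A).liftKaehlerDifferential (iotaOmega R A w) =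
    ((w, 0) : Ω[A⁄R] × Ω[A⁄R]) := by
  induction w using omega_induction with
  | hD a =>
    rw [iotaOmega_D, Derivation.liftKaehlerDifferential_comp_D]
    refine Prod.ext ?_ ?_
    · rfl
    · exact map_zero (KaehlerDifferential.D R A)
  | h0 => rw [map_zero, map_zero]; rfl
  | hadd x y hx hy =>
    rw [map_add, map_add, hx, hy]
    exact Prod.ext rfl (add_zero _)
  | hsmul a x hx =>
    rw [iotaOmega_smul, map_smul, hx]
    refine Prod.ext rfl ?_
    change a • (0 : Ω[A⁄R]) + (0 : A) • x = 0
    simp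

lemma projOmega_D (x : A[ε]) : projOmega R A (KaehlerDifferential.D R[ε] A[ε] x) =
    KaehlerDifferential.D R A x.fst :=
  KaehlerDifferential.map_D R[ε] R A[ε] A x

lemma projOmega_smul (x : A[ε]) (w : Ω[A[ε]⁄R[ε]]) :
    projOmega R A (x • w) = x.fst • projOmega R A w := by
  rw [map_smul]
  rfl

lemma projOmega_iota (w : Ω[A⁄R]) : projOmega R A (iotaOmega R A w) = w := by
  induction w using omega_induction with
  | hD a => rw [iotaOmega_D, projOmega_D]; rfl
  | h0 => rw [map_zero, map_zero]
  | hadd x y hx hy => rw [map_add, map_add, hx, hy]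
  | hsmul a x hx => rw [iotaOmega_smul, projOmega_smul, hx]; rfl

lemma dual_eq (x : A[ε]) : x = inl x.fst + ε * inl x.snd := by
  ext <;> simp

lemma eps_smul_eps_smul (w : Ω[A[ε]⁄R[ε]]) : (ε : A[ε]) • (ε : A[ε]) • w = 0 := by
  rw [← gen_mul_smul, DualNumber.eps_mul_eps, gen_zero_smul]

lemma omega_decomp (z : Ω[A[ε]⁄R[ε]]) :
    ∃ u v : Ω[A⁄R], z = iotaOmega R A u + (ε : A[ε]) • iotaOmega R A v := by
  induction z using omega_induction with
  | hD x =>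
    refine ⟨KaehlerDifferential.D R A x.fst, KaehlerDifferential.D R A x.snd, ?_⟩
    have h : KaehlerDifferential.D R[ε] A[ε] ε = 0 := by
      rw [← algebraMap_eps R A]; exact Derivation.map_algebraMap _ _
    conv_lhs => rw [dual_eq A x, map_add, Derivation.leibniz, h, smul_zero, add_zero]
    rw [iotaOmega_D, iotaOmega_D]
  | h0 => exact ⟨0, 0, by rw [map_zero, gen_smul_zero, add_zero]⟩
  | hadd x y hx hy =>
    obtain ⟨u, v, rfl⟩ := hx
    obtain ⟨u', v', rfl⟩ := hy
    refine ⟨u + u', v + v', ?_⟩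
    rw [map_add, map_add, gen_smul_add]
    abel
  | hsmul a x hx =>
    obtain ⟨u, v, rfl⟩ := hx
    refine ⟨a.fst • u, a.fst • v + a.snd • u, ?_⟩
    rw [map_add, iotaOmega_smul, iotaOmega_smul, iotaOmega_smul]
    conv_lhs => rw [dual_eq A a]
    simp only [gen_add_smul, gen_smul_add, gen_mul_smul]
    rw [gen_smul_comm (inl a.snd : A[ε]) (ε : A[ε]), eps_smul_eps_smul,
      gen_smul_comm (inl a.fst : A[ε]) (ε : A[ε])]
    abel

/-- The map `ω ↦ ε • ι ω` as a linear map. -/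
def epsIota : Ω[A⁄R] →ₗ[A] Ω[A[ε]⁄R[ε]] where
  toFun w := (ε : A[ε]) • iotaOmega R A w
  map_add' x y := by rw [map_add, gen_smul_add]
  map_smul' a x := by
    rw [iotaOmega_smul, RingHom.id_apply, ← algebraMap_smul A[ε] a]
    exact gen_smul_comm _ _ _

lemma epsIota_injective :
    Function.Injective (fun w : Ω[A⁄R] => (ε : A[ε]) • iotaOmega R A w) := by
  intro x y h
  have h2 := congrArg (epsDer R A).liftKaehlerDifferential h
  simp only [map_smul, lift_iota] at h2
  have h3 : (0 : A) • (0 : Ω[A⁄R]) + (1 : A) • x = (0 : A) • (0 : Ω[A⁄R]) + (1 : A) • y :=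
    congrArg Prod.snd h2
  simpa using h3

lemma epsIota_range : Set.range (fun w : Ω[A⁄R] => (ε : A[ε]) • iotaOmega R A w) =
      ↑(LinearMap.ker (projOmega R A)) := by
  ext z
  constructor
  · rintro ⟨w, rfl⟩
    change projOmega R A _ = 0
    rw [projOmega_smul]
    simp
  · intro hz
    obtain ⟨u, v, rfl⟩ := omega_decomp R A z
    have hz' : projOmega R A (iotaOmega R A u + (ε : A[ε]) • iotaOmega R A v) = 0 := hz
    rw [map_add, projOmega_iota, projOmega_smul, DualNumber.fst_eps, zero_smul, add_zero] at hz'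
    exact ⟨v, by simp [hz']⟩

/-- The `A`-linear map `Ω[A⁄R] → Ω[A[ε]⁄R[ε]]`, `ω ↦ ε • ι ω`, is injective, its image is
the kernel of the map induced by setting `ε = 0`; in particular that kernel is isomorphic
to `Ω[A⁄R]` as an `A`-module. -/
theorem eps_smul_iota_injective_range_eq_ker :
    Function.Injective (fun w : Ω[A⁄R] => (ε : A[ε]) • iotaOmega R A w) ∧
    Set.range (fun w : Ω[A⁄R] => (ε : A[ε]) • iotaOmega R A w) =
      ↑(LinearMap.ker (projOmega R A)) ∧
    Nonempty (Ω[A⁄R] ≃ₗ[A]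
      (Submodule.restrictScalars A (LinearMap.ker (projOmega R A)))) := by
  refine ⟨epsIota_injective R A, epsIota_range R A, ⟨?_⟩⟩
  refine (LinearEquiv.ofInjective (epsIota R A) (epsIota_injective R A)).trans
    (LinearEquiv.ofEq _ _ ?_)
  exact SetLike.coe_injective (epsIota_range R A)
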